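/- The vector field L satisfies the Liouville property — i.e. every bounded function u ∈ C¹(ℝ²∖{0}) with Lu = 0 pointwise on ℝ²∖{0} is constant — if and only if Re μ ≠ 0 (equivalently, given the normalization Re μ ≥ 0, if and only if Re μ > 0). -/

import Mathlib

open Real Complex Set

open MeasureTheory Filter Topology Bornology

/-!
In logarithmic polar coordinates `(t, θ)` the equation `Lu = 0` becomes the transport equation
`∂U/∂θ = m(θ) ∂U/∂t` with the complex, `2π`-periodic speed `m = i q / p`. If `Φ' = m`, then
`t + Φ(θ)` is a first integral, and so is every holomorphic function of it.

Multiply a bounded solution `U` by a Gaussian in the first integral and integrate over `t`: the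
result does not depend on `θ`, so the Gaussian average of `U(·, θ)` with centre `w - Φ(θ)` is the
same for all `θ`. As a function of its centre such an average is entire. If `Re μ ≠ 0`, then
`Im Φ` takes every real value, so every centre can be moved to the real axis, where the average
is bounded by a constant; by Liouville's theorem it does not depend on `w`. Letting the Gaussian
concentrate shows that `U` does not depend on `t`, hence is constant.

If `Re μ = 0`, then `Φ(2π)` is real and `exp (iκ (t + Φ(θ)))` is, for a real `κ ≠ 0` with
`κ Φ(2π) ∈ 2πℤ`, `2π`-periodic in `θ`, bounded and not constant.
-/

section GaussianTransform

variable {c C : ℝ} {v : ℝ → ℂ}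

theorem norm_cexp_neg_mul_sub_sq_le (hc : 0 ≤ c) (ζ : ℂ) (σ : ℝ) :
    ‖cexp (-c * (ζ - σ) ^ 2)‖ ≤ rexp (3 * c * ‖ζ‖ ^ 2) * rexp (-(c / 2) * σ ^ 2) := by
  have hre : (-(c : ℂ) * (ζ - σ) ^ 2).re = -c * ((ζ.re - σ) ^ 2 - ζ.im ^ 2) := by
    simp [pow_two]
  rw [Complex.norm_exp, ← Real.exp_add, Real.exp_le_exp, hre, Complex.sq_norm, normSq_apply]
  have hsq_le : -((ζ.re - σ) ^ 2 - ζ.im ^ 2) ≤ 3 * (ζ.re * ζ.re + ζ.im * ζ.im) - σ ^ 2 / 2 := by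
    nlinarith [sq_nonneg (σ - 2 * ζ.re), sq_nonneg ζ.re, sq_nonneg ζ.im]
  linarith [mul_le_mul_of_nonneg_left hsq_le hc]

/-- The Gaussian average `∫ v(σ) exp(-c (w - σ)²) dσ` of a function on the line. It is not
normalised, and the centre `w` may be complex: the point is that it is entire in `w`. -/
noncomputable def gaussianTransform (c : ℝ) (v : ℝ → ℂ) (w : ℂ) : ℂ :=
  ∫ σ : ℝ, v σ * cexp (-c * (w - σ) ^ 2)

theorem integrable_mul_cexp_neg_mul_sub_sq (hc : 0 < c) (hv : AEStronglyMeasurable v)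
    (hC : ∀ σ, ‖v σ‖ ≤ C) (w : ℂ) : Integrable fun σ : ℝ => v σ * cexp (-c * (w - σ) ^ 2) := by
  refine Integrable.bdd_mul (c := C) ?_ hv (ae_of_all _ hC)
  convert! integrable_cexp_quadratic (b := c) (by simpa) (2 * c * w) (-c * w ^ 2) using 3
  ring

theorem integrable_const_add_abs_mul_exp_neg_mul_sq (hc : 0 < c) (K : ℝ) :
    Integrable fun σ : ℝ => (K + |σ|) * rexp (-c * σ ^ 2) := by
  simp only [add_mul]
  refine ((integrable_exp_neg_mul_sq hc).const_mul K).add ?_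
  simpa [abs_mul] using (integrable_mul_exp_neg_mul_sq hc).norm

theorem differentiable_gaussianTransform (hc : 0 < c) (hv : AEStronglyMeasurable v)
    (hC : ∀ σ, ‖v σ‖ ≤ C) : Differentiable ℂ (gaussianTransform c v) := by
  intro w₀
  let K : ℝ := ‖w₀‖ + 1
  let F' (w : ℂ) (σ : ℝ) : ℂ := v σ * (cexp (-c * (w - σ) ^ 2) * (-c * (2 * (w - σ))))
  let bound (σ : ℝ) : ℝ :=
    C * rexp (3 * c * K ^ 2) * (2 * c) * ((K + |σ|) * rexp (-(c / 2) * σ ^ 2))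
  have hF' : ∀ σ, ∀ w ∈ Metric.ball w₀ 1, ‖F' w σ‖ ≤ bound σ := by
    intro σ w hw
    have hwK : ‖w‖ ≤ K := by
      linarith [norm_le_norm_add_norm_sub' w w₀, mem_ball_iff_norm.1 hw]
    have hwσ : ‖w - σ‖ ≤ K + |σ| := by
      linarith [norm_sub_le w σ, Complex.norm_real σ, Real.norm_eq_abs σ]
    calc ‖F' w σ‖ = ‖v σ‖ * (‖cexp (-c * (w - σ) ^ 2)‖ * (c * (2 * ‖w - σ‖))) := by
          simp [F', abs_of_pos hc]
      _ ≤ C * ((rexp (3 * c * K ^ 2) * rexp (-(c / 2) * σ ^ 2)) * (c * (2 * (K + |σ|)))) := by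
          have hC0 : 0 ≤ C := (norm_nonneg _).trans (hC 0)
          gcongr
          · exact hC σ
          · exact (norm_cexp_neg_mul_sub_sq_le hc.le w σ).trans (by gcongr)
      _ = bound σ := by ring
  have hderiv : ∀ (σ : ℝ) (w : ℂ),
      HasDerivAt (fun w => v σ * cexp (-c * (w - σ) ^ 2)) (F' w σ) w := fun σ w => by
    simpa [F'] using
      ((((hasDerivAt_id w).sub_const (σ : ℂ)).pow 2).const_mul (-(c : ℂ))).cexp.const_mul (v σ)
  exact (hasDerivAt_integral_of_dominated_loc_of_deriv_le (Metric.ball_mem_nhds w₀ one_pos)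
    (Eventually.of_forall fun w => (integrable_mul_cexp_neg_mul_sub_sq hc hv hC w).1)
    (integrable_mul_cexp_neg_mul_sub_sq hc hv hC w₀) (by fun_prop) (ae_of_all _ hF')
    ((integrable_const_add_abs_mul_exp_neg_mul_sq (half_pos hc) K).const_mul _)
    (ae_of_all _ fun σ w _ => hderiv σ w)).2.differentiableAt

theorem norm_gaussianTransform_ofReal_le (hc : 0 < c) (hC : ∀ σ, ‖v σ‖ ≤ C) (x : ℝ) :
    ‖gaussianTransform c v x‖ ≤ C * √(π / c) := by
  rw [← integral_gaussian, ← integral_const_mul,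
    ← integral_sub_left_eq_self (fun σ : ℝ => C * rexp (-c * σ ^ 2)) volume x]
  refine norm_integral_le_of_norm_le
    (((integrable_exp_neg_mul_sq hc).const_mul C).comp_sub_left x) (ae_of_all _ fun σ => ?_)
  have hexp : ‖cexp (-(c : ℂ) * (x - σ) ^ 2)‖ = rexp (-c * (x - σ) ^ 2) := by
    rw [← norm_of_nonneg (Real.exp_pos _).le, ← Complex.norm_real]
    norm_cast
  rw [norm_mul, hexp]
  gcongr
  exact hC σ

theorem sqrt_mul_gaussianTransform_ofReal (hc : 0 < c) (v : ℝ → ℂ) (x : ℝ) :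
    √c * gaussianTransform c v x = ∫ τ : ℝ, v (x - τ / √c) * rexp (-1 * τ ^ 2) := by
  have hsq : ((√c : ℝ) : ℂ) ^ 2 = c := by exact_mod_cast Real.sq_sqrt hc.le
  have hne : ((√c : ℝ) : ℂ) ≠ 0 := by exact_mod_cast (Real.sqrt_pos.2 hc).ne'
  have hsub := Measure.integral_comp_div
    (fun σ : ℝ => v (x - σ) * cexp (-c * (x - (x - σ : ℝ)) ^ 2)) √c
  rw [abs_of_nonneg (Real.sqrt_nonneg c), integral_sub_left_eq_self
    (fun σ : ℝ => v σ * cexp (-(c : ℂ) * (x - σ) ^ 2)) volume x, Complex.real_smul] at hsub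
  rw [gaussianTransform, ← hsub]
  congr with τ
  push_cast
  rw [← hsq]
  congr 2
  field_simp
  ring

theorem tendsto_sqrt_mul_gaussianTransform_ofReal (hv : Continuous v) (hC : ∀ σ, ‖v σ‖ ≤ C)
    (x : ℝ) : Tendsto (fun c : ℝ => √c * gaussianTransform c v x) atTop (𝓝 (v x * √π)) := by
  have hlim : Tendsto (fun c : ℝ => ∫ τ : ℝ, v (x - τ / √c) * rexp (-1 * τ ^ 2)) atTop
      (𝓝 (∫ τ : ℝ, v x * rexp (-1 * τ ^ 2))) := by
    refine tendsto_integral_filter_of_dominated_convergence (fun τ => C * rexp (-1 * τ ^ 2))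
      (Eventually.of_forall fun c => by fun_prop) (Eventually.of_forall fun c =>
        ae_of_all _ fun τ => ?_) ((integrable_exp_neg_mul_sq one_pos).const_mul C)
      (ae_of_all _ fun τ => ?_)
    · rw [norm_mul, Complex.norm_real, Real.norm_of_nonneg (Real.exp_pos _).le]
      gcongr
      exact hC _
    · have harg : Tendsto (fun c => x - τ / √c) atTop (𝓝 x) := by
        simpa using (tendsto_const_nhds.div_atTop tendsto_sqrt_atTop).const_sub x
      exact ((hv.tendsto x).comp harg).mul_const _
  rw [integral_const_mul, integral_complex_ofReal, integral_gaussian, div_one] at hlim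
  refine hlim.congr' ?_
  filter_upwards [eventually_gt_atTop 0] with c hc
  exact (sqrt_mul_gaussianTransform_ofReal hc v x).symm

theorem eq_of_forall_gaussianTransform_eq (hv : Continuous v) (hC : ∀ σ, ‖v σ‖ ≤ C) {x y : ℝ}
    (h : ∀ c : ℝ, 0 < c → gaussianTransform c v x = gaussianTransform c v y) : v x = v y := by
  have hxy : v x * √π = v y * √π := by
    refine tendsto_nhds_unique (tendsto_sqrt_mul_gaussianTransform_ofReal hv hC x)
      ((tendsto_sqrt_mul_gaussianTransform_ofReal hv hC y).congr' ?_)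
    filter_upwards [eventually_gt_atTop 0] with c hc
    rw [h c hc]
  exact mul_right_cancel₀ (by exact_mod_cast (Real.sqrt_pos.2 Real.pi_pos).ne') hxy

end GaussianTransform

section Transport

theorem hasDerivAt_comp_mk_left {g : ℝ × ℝ → ℂ} (hg : Differentiable ℝ g) (t θ : ℝ) :
    HasDerivAt (fun s => g (s, θ)) (fderiv ℝ g (t, θ) (1, 0)) t :=
  (hg (t, θ)).hasFDerivAt.comp_hasDerivAt t ((hasDerivAt_id t).prodMk (hasDerivAt_const t θ))

theorem hasDerivAt_comp_mk_right {g : ℝ × ℝ → ℂ} (hg : Differentiable ℝ g) (t θ : ℝ) :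
    HasDerivAt (fun s => g (t, s)) (fderiv ℝ g (t, θ) (0, 1)) θ :=
  (hg (t, θ)).hasFDerivAt.comp_hasDerivAt θ ((hasDerivAt_const θ t).prodMk (hasDerivAt_id θ))

/-- `g(t, θ)` solves the transport equation `∂g/∂θ = m(θ) ∂g/∂t` with complex speed `m`. The
equation is meant for differentiable `g`; regularity is always assumed separately. -/
def IsTransportSolution (m : ℝ → ℂ) (g : ℝ × ℝ → ℂ) : Prop :=
  ∀ z, fderiv ℝ g z (0, 1) = m z.2 * fderiv ℝ g z (1, 0)

variable {m Φ : ℝ → ℂ} {f : ℂ → ℂ} {g h U : ℝ × ℝ → ℂ} {C c : ℝ}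

theorem IsTransportSolution.mul (hg : IsTransportSolution m g) (hh : IsTransportSolution m h)
    (hgd : Differentiable ℝ g) (hhd : Differentiable ℝ h) :
    IsTransportSolution m fun z => g z * h z := by
  intro z
  simp only [fderiv_fun_mul (hgd z) (hhd z), add_apply, smul_apply, smul_eq_mul, hg z, hh z]
  ring

theorem isTransportSolution_comp_add (hf : Differentiable ℂ f)
    (hΦ : ∀ θ, HasDerivAt Φ (m θ) θ) : IsTransportSolution m fun z => f (z.1 + Φ z.2) := by
  intro z
  have ht : HasFDerivAt (fun z : ℝ × ℝ => (z.1 : ℂ)) (ofRealCLM ∘L .fst ℝ ℝ ℝ) z :=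
    (ofRealCLM ∘L .fst ℝ ℝ ℝ).hasFDerivAt
  have hθ := (hΦ z.2).hasFDerivAt.comp z hasFDerivAt_snd
  have hcomp := (hf (z.1 + Φ z.2)).hasDerivAt.comp_hasFDerivAt z (ht.add hθ)
  rw [show fderiv ℝ (fun z : ℝ × ℝ => f (z.1 + Φ z.2)) z = _ from hcomp.fderiv]
  simp [mul_comm]

theorem contDiff_one_comp_add (hf : Differentiable ℂ f) (hm : Continuous m)
    (hΦ : ∀ θ, HasDerivAt Φ (m θ) θ) :
    ContDiff ℝ 1 fun z : ℝ × ℝ => f (z.1 + Φ z.2) := by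
  have hΦ1 : ContDiff ℝ 1 Φ := contDiff_one_iff_deriv.2
    ⟨fun θ => (hΦ θ).differentiableAt, by rwa [funext fun θ => (hΦ θ).deriv]⟩
  exact (hf.contDiff.restrict_scalars ℝ).comp
    ((ofRealCLM.contDiff.comp contDiff_fst).add (hΦ1.comp contDiff_snd))

theorem IsTransportSolution.integral_sub_integral (hg : IsTransportSolution m g)
    (hg1 : ContDiff ℝ 1 g) (hm : Continuous m) (t₁ t₂ θ₁ θ₂ : ℝ) :
    (∫ t in t₁..t₂, g (t, θ₂)) - ∫ t in t₁..t₂, g (t, θ₁) =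
      ∫ θ in θ₁..θ₂, m θ * (g (t₂, θ) - g (t₁, θ)) := by
  have hgd : Differentiable ℝ g := hg1.differentiable one_ne_zero
  have hgc : Continuous g := hgd.continuous
  have hg' (e : ℝ × ℝ) : Continuous fun z => fderiv ℝ g z e :=
    (hg1.continuous_fderiv one_ne_zero).clm_apply continuous_const
  calc (∫ t in t₁..t₂, g (t, θ₂)) - ∫ t in t₁..t₂, g (t, θ₁)
      = ∫ t in t₁..t₂, (g (t, θ₂) - g (t, θ₁)) :=
        (intervalIntegral.integral_sub (Continuous.intervalIntegrable (by fun_prop) _ _)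
          (Continuous.intervalIntegrable (by fun_prop) _ _)).symm
    _ = ∫ t in t₁..t₂, ∫ θ in θ₁..θ₂, m θ * fderiv ℝ g (t, θ) (1, 0) := by
        congr with t
        simp only [← hg (t, _)]
        exact (intervalIntegral.integral_eq_sub_of_hasDerivAt
          (fun θ _ => hasDerivAt_comp_mk_right hgd t θ)
          (((hg' (0, 1)).comp (by fun_prop)).intervalIntegrable _ _)).symm
    _ = ∫ θ in θ₁..θ₂, ∫ t in t₁..t₂, m θ * fderiv ℝ g (t, θ) (1, 0) :=
        intervalIntegral_intervalIntegral_swap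
          ((((hm.comp continuous_snd).mul (hg' (1, 0))).continuousOn.integrableOn_compact
            (isCompact_uIcc.prod isCompact_uIcc)).mono_set
              (prod_mono uIoc_subset_uIcc uIoc_subset_uIcc))
    _ = ∫ θ in θ₁..θ₂, m θ * (g (t₂, θ) - g (t₁, θ)) := by
        congr with θ
        rw [intervalIntegral.integral_const_mul, intervalIntegral.integral_eq_sub_of_hasDerivAt
          (fun t _ => hasDerivAt_comp_mk_left hgd t θ)
          (((hg' (1, 0)).comp (by fun_prop)).intervalIntegrable _ _)]

theorem IsTransportSolution.integral_eq_of_norm_le (hg : IsTransportSolution m g)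
    (hg1 : ContDiff ℝ 1 g) (hm : Continuous m) {θ₁ θ₂ : ℝ}
    (hint : ∀ θ, Integrable fun t => g (t, θ)) {b : ℝ → ℝ} (hb : Tendsto b (cocompact ℝ) (𝓝 0))
    (hgb : ∀ t, ∀ θ ∈ uIcc θ₁ θ₂, ‖g (t, θ)‖ ≤ b t) :
    ∫ t, g (t, θ₁) = ∫ t, g (t, θ₂) := by
  obtain ⟨K, hK⟩ := isCompact_uIcc.exists_bound_of_continuousOn (hm.continuousOn (s := uIcc θ₁ θ₂))
  have hK0 : 0 ≤ K := (norm_nonneg _).trans (hK θ₁ left_mem_uIcc)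
  have hslice θ : Tendsto (fun N : ℝ => ∫ t in -N..N, g (t, θ)) atTop (𝓝 (∫ t, g (t, θ))) :=
    intervalIntegral_tendsto_integral (hint θ) tendsto_neg_atTop_atBot tendsto_id
  have hflux : Tendsto (fun N : ℝ => ∫ θ in θ₁..θ₂, m θ * (g (N, θ) - g (-N, θ))) atTop
      (𝓝 0) := by
    have hb_top : Tendsto b atTop (𝓝 0) := hb.mono_left atTop_le_cocompact
    have hb_bot : Tendsto (fun N => b (-N)) atTop (𝓝 0) :=
      (hb.mono_left atBot_le_cocompact).comp tendsto_neg_atTop_atBot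
    have hlim : Tendsto (fun N => K * (b N + b (-N)) * |θ₂ - θ₁|) atTop (𝓝 0) := by
      simpa using ((hb_top.add hb_bot).const_mul K).mul_const |θ₂ - θ₁|
    refine squeeze_zero_norm (fun N => ?_) hlim
    refine intervalIntegral.norm_integral_le_of_norm_le_const fun θ hθ => ?_
    have hθ' := uIoc_subset_uIcc hθ
    rw [norm_mul]
    gcongr
    · exact hK θ hθ'
    · exact (norm_sub_le _ _).trans (add_le_add (hgb _ θ hθ') (hgb _ θ hθ'))
  refine (sub_eq_zero.1 (tendsto_nhds_unique ((hslice θ₂).sub (hslice θ₁)) ?_)).symm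
  simpa only [hg.integral_sub_integral hg1 hm] using hflux

theorem IsTransportSolution.gaussianTransform_sub_eq (hU : IsTransportSolution m U)
    (hU1 : ContDiff ℝ 1 U) (hC : ∀ z, ‖U z‖ ≤ C) (hm : Continuous m)
    (hΦ : ∀ θ, HasDerivAt Φ (m θ) θ) (hc : 0 < c) (w : ℂ) (θ₁ θ₂ : ℝ) :
    gaussianTransform c (fun t => U (t, θ₁)) (w - Φ θ₁) =
      gaussianTransform c (fun t => U (t, θ₂)) (w - Φ θ₂) := by
  have hUc : Continuous U := hU1.continuous
  have hΦc : Continuous Φ := continuous_iff_continuousAt.2 fun θ => (hΦ θ).continuousAt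
  have hC0 : 0 ≤ C := (norm_nonneg _).trans (hC 0)
  let f (ζ : ℂ) : ℂ := cexp (-c * (w - ζ) ^ 2)
  have hf : Differentiable ℂ f := by fun_prop
  have hkernel (t θ : ℝ) : cexp (-c * (w - Φ θ - t) ^ 2) = f (t + Φ θ) := by
    simp only [f]
    ring_nf
  have hf1 := contDiff_one_comp_add hf hm hΦ
  have hUf := hU.mul (isTransportSolution_comp_add hf hΦ) (hU1.differentiable one_ne_zero)
    (hf1.differentiable one_ne_zero)
  obtain ⟨K, hK⟩ := isCompact_uIcc.exists_bound_of_continuousOn (s := uIcc θ₁ θ₂)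
    (f := fun θ => w - Φ θ) (by fun_prop)
  let b (t : ℝ) : ℝ := C * (rexp (3 * c * K ^ 2) * rexp (-(c / 2) * t ^ 2))
  have hb : Tendsto b (cocompact ℝ) (𝓝 0) := by
    simpa [b] using ((tendsto_rpow_abs_mul_exp_neg_mul_sq_cocompact (half_pos hc)
      0).const_mul (rexp (3 * c * K ^ 2))).const_mul C
  have hUb : ∀ t, ∀ θ ∈ uIcc θ₁ θ₂, ‖U (t, θ) * f (t + Φ θ)‖ ≤ b t := by
    intro t θ hθ
    rw [norm_mul, ← hkernel]
    refine mul_le_mul (hC _) ?_ (norm_nonneg _) hC0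
    exact (norm_cexp_neg_mul_sub_sq_le hc.le (w - Φ θ) t).trans (by gcongr; exact hK θ hθ)
  simp only [gaussianTransform, hkernel]
  refine hUf.integral_eq_of_norm_le (hU1.mul hf1) hm (fun θ => ?_) hb hUb
  simp only [← hkernel]
  exact integrable_mul_cexp_neg_mul_sub_sq hc
    (Continuous.aestronglyMeasurable (by fun_prop)) (fun t => hC _) _

theorem IsTransportSolution.isBounded_range_gaussianTransform (hU : IsTransportSolution m U)
    (hU1 : ContDiff ℝ 1 U) (hC : ∀ z, ‖U z‖ ≤ C) (hm : Continuous m)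
    (hΦ : ∀ θ, HasDerivAt Φ (m θ) θ) (hsurj : Function.Surjective fun θ => (Φ θ).im)
    (hc : 0 < c) (θ : ℝ) : IsBounded (range (gaussianTransform c fun t => U (t, θ))) := by
  refine isBounded_iff_forall_norm_le.2 ⟨C * √(π / c), ?_⟩
  rintro _ ⟨w, rfl⟩
  obtain ⟨φ, hφ : (Φ φ).im = (w + Φ θ).im⟩ := hsurj _
  have hreal : w + Φ θ - Φ φ = ((w + Φ θ - Φ φ).re : ℂ) :=
    Complex.ext (by simp) (by rw [sub_im, hφ, sub_self, ofReal_im])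
  rw [← add_sub_cancel_right w (Φ θ), hU.gaussianTransform_sub_eq hU1 hC hm hΦ hc _ θ φ, hreal]
  exact norm_gaussianTransform_ofReal_le hc (fun t => hC _) _

theorem IsTransportSolution.eq_of_bounded (hU : IsTransportSolution m U)
    (hU1 : ContDiff ℝ 1 U) (hC : ∀ z, ‖U z‖ ≤ C) (hm : Continuous m)
    (hΦ : ∀ θ, HasDerivAt Φ (m θ) θ) (hsurj : Function.Surjective fun θ => (Φ θ).im)
    (z z' : ℝ × ℝ) : U z = U z' := by
  have hUd : Differentiable ℝ U := hU1.differentiable one_ne_zero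
  have hUc (θ : ℝ) : Continuous fun t => U (t, θ) := by fun_prop
  have hslice (θ t s : ℝ) : U (t, θ) = U (s, θ) :=
    eq_of_forall_gaussianTransform_eq (hUc θ) (fun t => hC (t, θ)) fun c hc =>
      (differentiable_gaussianTransform hc (hUc θ).aestronglyMeasurable
        fun t => hC (t, θ)).apply_eq_apply_of_bounded
          (hU.isBounded_range_gaussianTransform hU1 hC hm hΦ hsurj hc θ) t s
  have hUt (z : ℝ × ℝ) : fderiv ℝ U z (1, 0) = 0 := by
    have hderiv := hasDerivAt_comp_mk_left hUd z.1 z.2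
    simp only [fun t => hslice z.2 t 0] at hderiv
    exact hderiv.unique (hasDerivAt_const _ _)
  refine is_const_of_fderiv_eq_zero hUd (fun z => ?_) z z'
  ext
  · simpa using hUt z
  · simp [hU z, hUt z]

end Transport

section PeriodicTransport

theorem surjective_integral_of_periodic {g : ℝ → ℝ} {T : ℝ} (hper : Function.Periodic g T)
    (hg : Continuous g) (hT : 0 < T) (hne : ∫ x in 0..T, g x ≠ 0) :
    Function.Surjective fun t => ∫ x in 0..t, g x := by
  have hprim : Continuous fun t => ∫ x in 0..t, g x :=
    intervalIntegral.continuous_primitive (fun _ _ => hg.intervalIntegrable _ _) 0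
  rcases hne.lt_or_gt with hneg | hpos
  · have hper' : Function.Periodic (fun x => -g x) T := fun x => congrArg Neg.neg (hper x)
    have hpos' : 0 < ∫ x in 0..T, -g x := by simpa using hneg
    have htop := hper'.tendsto_atTop_intervalIntegral_of_pos hpos' hT
    have hbot := hper'.tendsto_atBot_intervalIntegral_of_pos hpos' hT
    simp only [intervalIntegral.integral_neg, tendsto_neg_atTop_iff, tendsto_neg_atBot_iff]
      at htop hbot
    exact hprim.surjective' hbot htop
  · exact hprim.surjective (hper.tendsto_atTop_intervalIntegral_of_pos hpos hT)
      (hper.tendsto_atBot_intervalIntegral_of_pos hpos hT)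

variable {m : ℝ → ℂ} {T C : ℝ}

theorem intervalIntegral_im_comm (hm : Continuous m) (x y : ℝ) :
    ∫ θ in x..y, (m θ).im = (∫ θ in x..y, m θ).im :=
  imCLM.intervalIntegral_comp_comm (hm.intervalIntegrable x y)

theorem IsTransportSolution.eq_of_bounded_of_periodic {U : ℝ × ℝ → ℂ}
    (hU : IsTransportSolution m U) (hU1 : ContDiff ℝ 1 U) (hC : ∀ z, ‖U z‖ ≤ C)
    (hm : Continuous m) (hper : Function.Periodic m T) (hT : 0 < T)
    (hne : (∫ θ in 0..T, m θ).im ≠ 0) (z z' : ℝ × ℝ) : U z = U z' := by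
  refine hU.eq_of_bounded hU1 hC hm
    (fun θ => (hm.integral_hasStrictDerivAt 0 θ).hasDerivAt) ?_ z z'
  simp only [← intervalIntegral_im_comm hm] at hne ⊢
  exact surjective_integral_of_periodic (hper.comp im) (continuous_im.comp hm) hT hne

theorem exists_ne_zero_cexp_I_mul_mul_eq_one (τ : ℝ) :
    ∃ κ : ℝ, κ ≠ 0 ∧ cexp (I * κ * τ) = 1 := by
  rcases eq_or_ne τ 0 with rfl | hτ
  · exact ⟨1, one_ne_zero, by simp⟩
  · refine ⟨2 * π / τ, by positivity, ?_⟩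
    have hτ' : (τ : ℂ) ≠ 0 := by exact_mod_cast hτ
    rw [← Complex.exp_two_pi_mul_I]
    push_cast
    congr 1
    field_simp

theorem exists_bounded_periodic_transportSolution (hm : Continuous m)
    (hper : Function.Periodic m T) (hT : T ≠ 0) (him : (∫ θ in 0..T, m θ).im = 0) :
    ∃ W : ℝ × ℝ → ℂ, ContDiff ℝ 1 W ∧ IsTransportSolution m W ∧
      (∀ t, Function.Periodic (fun θ => W (t, θ)) T) ∧ (∃ C, ∀ z, ‖W z‖ ≤ C) ∧
      ∃ z z', W z ≠ W z' := by
  set τ : ℝ := (∫ θ in 0..T, m θ).re with hτ_def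
  have hτ : ∫ θ in 0..T, m θ = τ := Complex.ext (by simp [hτ_def]) (by simpa using him)
  obtain ⟨κ, hκ, hκτ⟩ := exists_ne_zero_cexp_I_mul_mul_eq_one τ
  let Φ (θ : ℝ) : ℂ := ∫ s in 0..θ, m s
  have hΦ (θ : ℝ) : HasDerivAt Φ (m θ) θ := (hm.integral_hasStrictDerivAt 0 θ).hasDerivAt
  have hΦc : Continuous Φ := continuous_iff_continuousAt.2 fun θ => (hΦ θ).continuousAt
  have hΦT (θ : ℝ) : Φ (θ + T) = Φ θ + τ := by
    simpa only [Φ, hτ, zero_add] using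
      hper.intervalIntegral_add_eq_add 0 θ fun _ _ => hm.intervalIntegrable _ _
  let f (ζ : ℂ) : ℂ := cexp (I * κ * ζ)
  have hf : Differentiable ℂ f := by fun_prop
  have hf_add (ζ : ℂ) : f (ζ + τ) = f ζ := by
    simp only [f, mul_add, Complex.exp_add, hκτ, mul_one]
  have hnorm (z : ℝ × ℝ) : ‖f (z.1 + Φ z.2)‖ = ‖f (Φ z.2)‖ := by
    simp [f, Complex.norm_exp]
  have hfΦ : Function.Periodic (fun θ => f (Φ θ)) T := fun θ => by simp only [hΦT, hf_add]
  obtain ⟨C, hC⟩ := isBounded_iff_forall_norm_le.1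
    (hfΦ.isBounded_of_continuous hT (hf.continuous.comp hΦc))
  refine ⟨fun z => f (z.1 + Φ z.2), contDiff_one_comp_add hf hm hΦ,
    isTransportSolution_comp_add hf hΦ, fun t θ => ?_, ⟨C, fun z => ?_⟩, (π / κ, 0), 0, ?_⟩
  · simp only [hΦT, ← add_assoc, hf_add]
  · rw [hnorm]
    exact hC _ (mem_range_self z.2)
  · have hκ' : (κ : ℂ) ≠ 0 := by exact_mod_cast hκ
    have hπ : I * κ * (π / κ) = π * I := by field_simp
    norm_num [f, Φ, hπ]

end PeriodicTransport

section LogPolar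

/-- Logarithmic polar coordinates `(t, θ) ↦ (eᵗ cos θ, eᵗ sin θ)`, that is, the complex
exponential under the identification `ℂ ≃ ℝ × ℝ`. -/
noncomputable def logPolar (z : ℝ × ℝ) : ℝ × ℝ :=
  (rexp z.1 * Real.cos z.2, rexp z.1 * Real.sin z.2)

theorem logPolar_eq_cexp (z : ℝ × ℝ) :
    logPolar z = equivRealProdCLM (cexp (equivRealProdCLM.symm z)) := by
  ext <;> simp [logPolar, Complex.exp_re, Complex.exp_im]

theorem logPolar_ne_zero (z : ℝ × ℝ) : logPolar z ≠ 0 := by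
  rw [logPolar_eq_cexp]
  exact (map_ne_zero_iff _ equivRealProdCLM.injective).2 (Complex.exp_ne_zero _)

theorem contDiff_logPolar {n : WithTop ℕ∞} : ContDiff ℝ n logPolar := by
  unfold logPolar
  fun_prop

-- Dividing by `z₀` first keeps the branch cut of the logarithm away from `z₀`.
theorem exists_contDiffAt_logPolar_rightInverse {n : WithTop ℕ∞} {z₀ : ℝ × ℝ} (hz₀ : z₀ ≠ 0) :
    ∃ ψ : ℝ × ℝ → ℝ × ℝ, ContDiffAt ℝ n ψ z₀ ∧ ∀ z, z ≠ 0 → logPolar (ψ z) = z := by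
  let e := equivRealProdCLM
  have hζ₀ : e.symm z₀ ≠ 0 := by simpa using hz₀
  refine ⟨fun z => e (Complex.log (e.symm z / e.symm z₀) + Complex.log (e.symm z₀)), ?_,
    fun z hz => ?_⟩
  · have hone : e.symm z₀ / e.symm z₀ ∈ slitPlane := by simp [div_self hζ₀]
    have hlog := ((contDiffAt_log hone (n := n)).restrict_scalars ℝ).comp z₀
      (e.symm.contDiff.contDiffAt.div_const (e.symm z₀))
    exact e.contDiff.contDiffAt.comp z₀ (hlog.add contDiffAt_const)
  · have hζ : e.symm z ≠ 0 := by simpa using hz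
    rw [logPolar_eq_cexp, e.symm_apply_apply, Complex.exp_add,
      Complex.exp_log (div_ne_zero hζ hζ₀), Complex.exp_log hζ₀, div_mul_cancel₀ _ hζ₀,
      e.apply_symm_apply]

theorem exists_logPolar_eq {z : ℝ × ℝ} (hz : z ≠ 0) : ∃ x, logPolar x = z :=
  let ⟨ψ, _, hψ⟩ := exists_contDiffAt_logPolar_rightInverse (n := 0) hz
  ⟨ψ z, hψ z hz⟩

theorem eq_of_logPolar_eq_of_periodic {E : Type*} {W : ℝ × ℝ → E}
    (hper : ∀ t, Function.Periodic (fun θ => W (t, θ)) (2 * π)) {x y : ℝ × ℝ}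
    (h : logPolar x = logPolar y) : W x = W y := by
  rw [logPolar_eq_cexp, logPolar_eq_cexp, equivRealProdCLM.injective.eq_iff] at h
  obtain ⟨n, hn⟩ := Complex.exp_eq_exp_iff_exists_int.1 h
  have ht : x.1 = y.1 := by simpa using congrArg re hn
  have hθ : x.2 = y.2 + n * (2 * π) := by simpa using congrArg im hn
  calc W x = W (y.1, y.2 + n * (2 * π)) := by rw [← ht, ← hθ]
    _ = W y := (hper y.1).int_mul n y.2

theorem exists_contDiffOn_comp_logPolar_eq {E : Type*} [NormedAddCommGroup E] [NormedSpace ℝ E]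
    {W : ℝ × ℝ → E} {n : WithTop ℕ∞} (hW : ContDiff ℝ n W)
    (hper : ∀ t, Function.Periodic (fun θ => W (t, θ)) (2 * π)) :
    ∃ u : ℝ × ℝ → E, ContDiffOn ℝ n u {z | z ≠ 0} ∧ u ∘ logPolar = W := by
  choose! ψ hψ using fun z (hz : z ≠ 0) => exists_logPolar_eq hz
  refine ⟨W ∘ ψ, fun z₀ hz₀ => ?_, funext fun x =>
    eq_of_logPolar_eq_of_periodic hper (hψ _ (logPolar_ne_zero x))⟩
  obtain ⟨ψ₀, hψ₀_smooth, hψ₀⟩ := exists_contDiffAt_logPolar_rightInverse (n := n) hz₀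
  refine ((hW.contDiffAt.comp z₀ hψ₀_smooth).contDiffWithinAt).congr (fun z hz => ?_) ?_
  · exact eq_of_logPolar_eq_of_periodic hper ((hψ z hz).trans (hψ₀ z hz).symm)
  · exact eq_of_logPolar_eq_of_periodic hper ((hψ z₀ hz₀).trans (hψ₀ z₀ hz₀).symm)

theorem hasFDerivAt_logPolar (z : ℝ × ℝ) :
    HasFDerivAt logPolar
      ((ContinuousLinearMap.fst ℝ ℝ ℝ).smulRight (logPolar z) +
        (ContinuousLinearMap.snd ℝ ℝ ℝ).smulRight (-(logPolar z).2, (logPolar z).1)) z := by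
  have hexp := (hasFDerivAt_fst (𝕜 := ℝ) (p := z)).exp
  have hθ := hasFDerivAt_snd (𝕜 := ℝ) (p := z)
  refine ((hexp.mul hθ.cos).prodMk (hexp.mul hθ.sin)).congr_fderiv ?_
  ext <;> simp [logPolar, mul_comm]

end LogPolar

section VectorField

variable {A B u : ℝ × ℝ → ℂ} {lam : ℂ}

/-- The Liouville property of the vector field `A ∂/∂x + B ∂/∂y` on the punctured plane. -/
def HasLiouvilleProperty (A B : ℝ × ℝ → ℂ) : Prop :=
  ∀ u : ℝ × ℝ → ℂ,
    ContDiffOn ℝ 1 u {z : ℝ × ℝ | z ≠ 0} →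
    (∃ C : ℝ, ∀ z : ℝ × ℝ, z ≠ 0 → ‖u z‖ ≤ C) →
    (∀ z : ℝ × ℝ, z ≠ 0 → A z * fderiv ℝ u z (1, 0) + B z * fderiv ℝ u z (0, 1) = 0) →
    ∃ c : ℂ, ∀ z : ℝ × ℝ, z ≠ 0 → u z = c

/-- The coefficient `p(θ)` of `∂/∂θ` on the unit circle for the vector field `A ∂/∂x + B ∂/∂y`. -/
noncomputable def angularCoeff (A B : ℝ × ℝ → ℂ) (θ : ℝ) : ℂ :=
  B (Real.cos θ, Real.sin θ) * Real.cos θ - A (Real.cos θ, Real.sin θ) * Real.sin θ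

/-- The function `q(θ)`: on the unit circle, `i` times the coefficient of `∂/∂r` for the vector
field `A ∂/∂x + B ∂/∂y`. -/
noncomputable def radialCoeff (A B : ℝ × ℝ → ℂ) (θ : ℝ) : ℂ :=
  I * (A (Real.cos θ, Real.sin θ) * Real.cos θ + B (Real.cos θ, Real.sin θ) * Real.sin θ)

/-- The speed of the transport equation to which `A ∂u/∂x + B ∂u/∂y = 0` reduces in logarithmic
polar coordinates; it is `i q(θ) / p(θ)`. -/
noncomputable def polarSpeed (A B : ℝ × ℝ → ℂ) (θ : ℝ) : ℂ :=
  I * (radialCoeff A B θ / angularCoeff A B θ)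

theorem periodic_polarSpeed (A B : ℝ × ℝ → ℂ) : Function.Periodic (polarSpeed A B) (2 * π) :=
  fun θ => by simp only [polarSpeed, radialCoeff, angularCoeff, Real.cos_add_two_pi,
    Real.sin_add_two_pi]

theorem continuous_polarSpeed (hA : ContinuousOn A {z | z ≠ 0}) (hB : ContinuousOn B {z | z ≠ 0})
    (hp : ∀ θ, angularCoeff A B θ ≠ 0) : Continuous (polarSpeed A B) := by
  have hcircle (θ : ℝ) : ((Real.cos θ, Real.sin θ) : ℝ × ℝ) ≠ 0 := by
    simpa [logPolar] using logPolar_ne_zero (0, θ)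
  have ha := hA.comp_continuous (Real.continuous_cos.prodMk Real.continuous_sin) hcircle
  have hb := hB.comp_continuous (Real.continuous_cos.prodMk Real.continuous_sin) hcircle
  have hcos : Continuous fun θ => (Real.cos θ : ℂ) := by fun_prop
  have hsin : Continuous fun θ => (Real.sin θ : ℂ) := by fun_prop
  have hq : Continuous (radialCoeff A B) := ((ha.mul hcos).add (hb.mul hsin)).const_mul I
  have hp' : Continuous (angularCoeff A B) := (hb.mul hcos).sub (ha.mul hsin)
  exact (hq.div hp' hp).const_mul I

theorem exp_mul_vectorField_logPolar
    (hAh : ∀ t : ℝ, 0 < t → ∀ z : ℝ × ℝ, A (t • z) = (t : ℂ) ^ lam * A z)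
    (hBh : ∀ t : ℝ, 0 < t → ∀ z : ℝ × ℝ, B (t • z) = (t : ℂ) ^ lam * B z)
    {z : ℝ × ℝ} (hu : DifferentiableAt ℝ u (logPolar z)) :
    rexp z.1 * (A (logPolar z) * fderiv ℝ u (logPolar z) (1, 0) +
        B (logPolar z) * fderiv ℝ u (logPolar z) (0, 1)) =
      (rexp z.1 : ℂ) ^ lam * (angularCoeff A B z.2 * fderiv ℝ (u ∘ logPolar) z (0, 1) -
        I * radialCoeff A B z.2 * fderiv ℝ (u ∘ logPolar) z (1, 0)) := by
  have hlin (x y : ℝ) : fderiv ℝ u (logPolar z) (x, y) =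
      x * fderiv ℝ u (logPolar z) (1, 0) + y * fderiv ℝ u (logPolar z) (0, 1) := by
    rw [show ((x, y) : ℝ × ℝ) = x • (1, 0) + y • (0, 1) by simp, map_add, map_smul, map_smul,
      real_smul, real_smul]
  have ht : fderiv ℝ (u ∘ logPolar) z (1, 0) = (logPolar z).1 * fderiv ℝ u (logPolar z) (1, 0) +
      (logPolar z).2 * fderiv ℝ u (logPolar z) (0, 1) := by
    simp [(hu.hasFDerivAt.comp z (hasFDerivAt_logPolar z)).fderiv, ← hlin]
  have hθ : fderiv ℝ (u ∘ logPolar) z (0, 1) =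
      -(logPolar z).2 * fderiv ℝ u (logPolar z) (1, 0) +
      (logPolar z).1 * fderiv ℝ u (logPolar z) (0, 1) := by
    simp [(hu.hasFDerivAt.comp z (hasFDerivAt_logPolar z)).fderiv, hlin (-(logPolar z).2)]
  have hP : logPolar z = rexp z.1 • (Real.cos z.2, Real.sin z.2) := rfl
  have hcircle : (Real.cos z.2 : ℂ) ^ 2 + (Real.sin z.2 : ℂ) ^ 2 = 1 := by
    exact_mod_cast Real.cos_sq_add_sin_sq z.2
  rw [ht, hθ]
  generalize fderiv ℝ u (logPolar z) (1, 0) = ux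
  generalize fderiv ℝ u (logPolar z) (0, 1) = uy
  rw [hP, hAh _ (Real.exp_pos _), hBh _ (Real.exp_pos _), angularCoeff, radialCoeff]
  simp only [Prod.smul_mk, smul_eq_mul, Complex.ofReal_mul]
  generalize A (Real.cos z.2, Real.sin z.2) = a
  generalize B (Real.cos z.2, Real.sin z.2) = b
  linear_combination -((rexp z.1 : ℂ) ^ lam * rexp z.1 * (a * ux + b * uy)) * hcircle +
    (rexp z.1 : ℂ) ^ lam * rexp z.1 * (a * Real.cos z.2 + b * Real.sin z.2) *
      (Real.cos z.2 * ux + Real.sin z.2 * uy) * I_sq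

theorem vectorField_eq_zero_iff_isTransportSolution
    (hAh : ∀ t : ℝ, 0 < t → ∀ z : ℝ × ℝ, A (t • z) = (t : ℂ) ^ lam * A z)
    (hBh : ∀ t : ℝ, 0 < t → ∀ z : ℝ × ℝ, B (t • z) = (t : ℂ) ^ lam * B z)
    (hp : ∀ θ, angularCoeff A B θ ≠ 0) (hu : ∀ z, DifferentiableAt ℝ u (logPolar z)) :
    (∀ z : ℝ × ℝ, z ≠ 0 → A z * fderiv ℝ u z (1, 0) + B z * fderiv ℝ u z (0, 1) = 0) ↔
      IsTransportSolution (polarSpeed A B) (u ∘ logPolar) := by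
  have hpoint (z : ℝ × ℝ) : A (logPolar z) * fderiv ℝ u (logPolar z) (1, 0) +
      B (logPolar z) * fderiv ℝ u (logPolar z) (0, 1) = 0 ↔
      fderiv ℝ (u ∘ logPolar) z (0, 1) =
        polarSpeed A B z.2 * fderiv ℝ (u ∘ logPolar) z (1, 0) := by
    have hr : (rexp z.1 : ℂ) ≠ 0 := by exact_mod_cast (Real.exp_pos z.1).ne'
    have hrlam : (rexp z.1 : ℂ) ^ lam ≠ 0 := by simp [cpow_eq_zero_iff]
    have hpz := hp z.2
    rw [← mul_right_inj' hr, exp_mul_vectorField_logPolar hAh hBh (hu z), mul_zero,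
      mul_eq_zero_iff_left hrlam, sub_eq_zero, polarSpeed]
    field_simp
  refine ⟨fun h z => (hpoint z).1 (h _ (logPolar_ne_zero z)), fun h z hz => ?_⟩
  obtain ⟨x, rfl⟩ := exists_logPolar_eq hz
  exact (hpoint x).2 (h x)

theorem hasLiouvilleProperty_iff_im_integral_ne_zero
    (hA : ContinuousOn A {z | z ≠ 0}) (hB : ContinuousOn B {z | z ≠ 0})
    (hAh : ∀ t : ℝ, 0 < t → ∀ z : ℝ × ℝ, A (t • z) = (t : ℂ) ^ lam * A z)
    (hBh : ∀ t : ℝ, 0 < t → ∀ z : ℝ × ℝ, B (t • z) = (t : ℂ) ^ lam * B z)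
    (hp : ∀ θ, angularCoeff A B θ ≠ 0) :
    HasLiouvilleProperty A B ↔ (∫ θ in 0..2 * π, polarSpeed A B θ).im ≠ 0 := by
  have hm := continuous_polarSpeed hA hB hp
  have hm_per := periodic_polarSpeed A B
  have hsmooth {u : ℝ × ℝ → ℂ} (hu : ContDiffOn ℝ 1 u {z | z ≠ 0}) (z : ℝ × ℝ) :
      ContDiffAt ℝ 1 u (logPolar z) :=
    hu.contDiffAt (isOpen_ne.mem_nhds (logPolar_ne_zero z))
  have hiff {u : ℝ × ℝ → ℂ} (hu : ContDiffOn ℝ 1 u {z | z ≠ 0}) :=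
    vectorField_eq_zero_iff_isTransportSolution hAh hBh hp
      fun z => (hsmooth hu z).differentiableAt one_ne_zero
  constructor
  · intro hL him
    obtain ⟨W, hW1, hW, hW_per, ⟨C, hC⟩, x, y, hxy⟩ :=
      exists_bounded_periodic_transportSolution hm hm_per two_pi_pos.ne' him
    obtain ⟨u, hu, rfl⟩ := exists_contDiffOn_comp_logPolar_eq hW1 hW_per
    have hu_bdd : ∀ z, z ≠ 0 → ‖u z‖ ≤ C := fun z hz => by
      obtain ⟨x, rfl⟩ := exists_logPolar_eq hz
      exact hC x
    obtain ⟨c, hc⟩ := hL u hu ⟨C, hu_bdd⟩ ((hiff hu).2 hW)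
    exact hxy ((hc _ (logPolar_ne_zero x)).trans (hc _ (logPolar_ne_zero y)).symm)
  · rintro hne u hu ⟨C, hC⟩ hLu
    have hU1 : ContDiff ℝ 1 (u ∘ logPolar) := contDiff_iff_contDiffAt.2 fun z =>
      (hsmooth hu z).comp z contDiff_logPolar.contDiffAt
    refine ⟨u (logPolar 0), fun z hz => ?_⟩
    obtain ⟨x, rfl⟩ := exists_logPolar_eq hz
    exact ((hiff hu).1 hLu).eq_of_bounded_of_periodic hU1 (fun z => hC _ (logPolar_ne_zero z))
      hm hm_per two_pi_pos hne x 0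

end VectorField

theorem stmt_9_general
    (A B : ℝ × ℝ → ℂ) (lam : ℂ)
    (hA : ContinuousOn A {z : ℝ × ℝ | z ≠ 0})
    (hB : ContinuousOn B {z : ℝ × ℝ | z ≠ 0})
    (hAh : ∀ t : ℝ, 0 < t → ∀ z : ℝ × ℝ, A (t • z) = (t : ℂ) ^ lam * A z)
    (hBh : ∀ t : ℝ, 0 < t → ∀ z : ℝ × ℝ, B (t • z) = (t : ℂ) ^ lam * B z)
    (a b p q : ℝ → ℂ)
    (ha : ∀ θ : ℝ, a θ = A (Real.cos θ, Real.sin θ))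
    (hb : ∀ θ : ℝ, b θ = B (Real.cos θ, Real.sin θ))
    (hpdef : ∀ θ : ℝ, p θ = b θ * (Real.cos θ : ℂ) - a θ * (Real.sin θ : ℂ))
    (hqdef : ∀ θ : ℝ, q θ = I * (a θ * (Real.cos θ : ℂ) + b θ * (Real.sin θ : ℂ)))
    (hp : ∀ θ : ℝ, p θ ≠ 0)
    (mu : ℂ)
    (hmudef : mu = (1 / (2 * π)) * ∫ θ in (0 : ℝ)..(2 * π), q θ / p θ) :
    HasLiouvilleProperty A B ↔ mu.re ≠ 0 := by
  obtain rfl : p = angularCoeff A B := funext fun θ => by rw [hpdef, ha, hb, angularCoeff]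
  obtain rfl : q = radialCoeff A B := funext fun θ => by rw [hqdef, ha, hb, radialCoeff]
  have hmean : ∫ θ in 0..2 * π, polarSpeed A B θ = (2 * π : ℝ) * (I * mu) := by
    simp only [polarSpeed, intervalIntegral.integral_const_mul, hmudef]
    push_cast
    field_simp
  rw [hasLiouvilleProperty_iff_im_integral_ne_zero hA hB hAh hBh hp, hmean, im_ofReal_mul, I_mul_im,
    mul_ne_zero_iff_left two_pi_pos.ne']

/-- L satisfies the Liouville property (every bounded C¹ solution of Lu = 0 on
ℝ²∖{0} is constant) if and only if Re μ > 0 (given the normalization Re μ ≥ 0). -/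
theorem stmt_9
    (A B : ℝ × ℝ → ℂ) (lam : ℂ)
    (hA : ContDiffOn ℝ (⊤ : ℕ∞) A {z : ℝ × ℝ | z ≠ 0})
    (hB : ContDiffOn ℝ (⊤ : ℕ∞) B {z : ℝ × ℝ | z ≠ 0})
    (hlam : 1 < lam.re)
    (hAh : ∀ t : ℝ, 0 < t → ∀ z : ℝ × ℝ, A (t • z) = (t : ℂ) ^ lam * A z)
    (hBh : ∀ t : ℝ, 0 < t → ∀ z : ℝ × ℝ, B (t • z) = (t : ℂ) ^ lam * B z)
    (a b p q : ℝ → ℂ)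
    (ha : ∀ θ : ℝ, a θ = A (Real.cos θ, Real.sin θ))
    (hb : ∀ θ : ℝ, b θ = B (Real.cos θ, Real.sin θ))
    (hpdef : ∀ θ : ℝ, p θ = b θ * (Real.cos θ : ℂ) - a θ * (Real.sin θ : ℂ))
    (hqdef : ∀ θ : ℝ, q θ = Complex.I * (a θ * (Real.cos θ : ℂ) + b θ * (Real.sin θ : ℂ)))
    (hC1 : interior {θ : ℝ | (q θ * (starRingEnd ℂ) (p θ)).re = 0} = ∅)
    (hC2 : ∀ θ : ℝ, p θ ≠ 0)
    (mu : ℂ)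
    (hmudef : mu = (1 / (2 * Real.pi)) * ∫ θ in (0:ℝ)..(2 * Real.pi), q θ / p θ)
    (hmunorm : 0 ≤ mu.re) :
    ((∀ u : ℝ × ℝ → ℂ,
        ContDiffOn ℝ 1 u {z : ℝ × ℝ | z ≠ 0} →
        (∃ C : ℝ, ∀ z : ℝ × ℝ, z ≠ 0 → ‖u z‖ ≤ C) →
        (∀ z : ℝ × ℝ, z ≠ 0 →
          A z * fderiv ℝ u z (1, 0) + B z * fderiv ℝ u z (0, 1) = 0) →
        ∃ c : ℂ, ∀ z : ℝ × ℝ, z ≠ 0 → u z = c)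
      ↔ 0 < mu.re) :=
  (stmt_9_general A B lam hA.continuousOn hB.continuousOn hAh hBh a b p q ha hb hpdef hqdef hC2 mu
    hmudef).trans hmunorm.lt_iff_ne'.symm
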